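/- A continuous map f : T → T' of topological spaces is a weak homotopy equivalence if and only if for every n ≥ −1 and every commutative square with g¹ : Sⁿ → T, g⁰ : D^{n+1} → T' and f∘g¹ = g⁰|_{Sⁿ}, there exists l : D^{n+1} → T such that the pair (l|_{Sⁿ}, f∘l) is homotopic to (g¹, g⁰) as a map of arrows, i.e. there are homotopies H¹ : Sⁿ × [0,1] → T and H⁰ : D^{n+1} × [0,1] → T' from g¹ to l|_{Sⁿ} and from g⁰ to f∘l respectively, with f∘H¹ = H⁰|_{Sⁿ×[0,1]}. -/

import Mathlib

/-!
Squares from the inclusion `S ⊆ D` of the unit sphere of a normed space into its unit disc to `f`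
are called liftable if they admit a diagonal up to homotopy of arrows. In a square `(g1, g0)` the
upper map is `g1 : S → T`. Liftability depends only on the homotopy class of the square, and any
homotopy of `g1` extends to a homotopy of the square by the homotopy extension property of `(D, S)`
(`exists_arrowHtpy`). Unit discs for different norms on spaces of the same dimension give
homeomorphic pairs `(D, S)` (`exists_homeo_disc`), so the disc may be taken Euclidean, a cube, or a
cylinder, as convenient. In dimension `0` liftability says that `f` is surjective on `π₀`.

If `f` is a weak equivalence, squares of dimension `n + 1` are lifted on the cylinder
`Iⁿ × [-1, 1]` (`liftable_prod`). A deformation of its boundary makes the upper map constant off the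
top face; the top face is then a based `n`-dimensional loop in `T`, and the map on the cylinder is a
nullhomotopy of its image in `T'`. By injectivity on `πₙ` (on `π₀` if `n = 0`) the loop itself is
nullhomotopic, so the upper map extends over the disc. Contracting the disc deforms the upper map to
a constant, and what remains is an element of `πₙ₊₁(T')`, lifted by surjectivity on `πₙ₊₁`.

Conversely, inserting the homotopy of upper maps in a collar of the sphere turns a diagonal up to
homotopy of arrows into one which restricts to `g1` on the sphere, the lower triangle commuting up
to homotopy relative to the sphere (`Liftable.exists_rel`). On `(Iⁿ, ∂Iⁿ)` with constant upper map
this is surjectivity on `πₙ`; on the cylinder, with two loops on the bottom and the top and a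
homotopy between their images inside, it is injectivity on `πₙ`.
-/

noncomputable section
open ContinuousMap

variable {X Y : Type*} [TopologicalSpace X] [TopologicalSpace Y]

/-- The map on path components induced by a continuous map. -/
def zerothHomotopyMap (f : C(X, Y)) : ZerothHomotopy X → ZerothHomotopy Y :=
  @Quotient.map _ _ (pathSetoid X) (pathSetoid Y) f
    (fun _ _ h => ⟨Path.map (Joined.somePath h) f.continuous⟩)

/-- The map on generalized loops induced by postcomposition with `f`. -/
def genLoopMap (N : Type*) (f : C(X, Y)) (x : X) (g : GenLoop N X x) :
    GenLoop N Y (f x) :=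
  ⟨f.comp g.1, fun y hy => by
    simp only [ContinuousMap.comp_apply]
    rw [g.2 y hy]⟩

/-- The induced map on homotopy groups `πₙ(X, x) → πₙ(Y, f x)`. -/
def homotopyGroupMap (N : Type*) (f : C(X, Y)) (x : X) :
    HomotopyGroup N X x → HomotopyGroup N Y (f x) :=
  Quotient.map (genLoopMap N f x)
    (fun _ _ h => Nonempty.map (fun H => H.compContinuousMap f) h)

/-- A continuous map is a weak homotopy equivalence if it induces a bijection on path
components and bijections on all homotopy groups at all basepoints. -/
def IsWeakHomotopyEquiv (f : C(X, Y)) : Prop :=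
  Function.Bijective (zerothHomotopyMap f) ∧
    ∀ (n : ℕ) (x : X), Function.Bijective (homotopyGroupMap (Fin (n + 1)) f x)


/-! ### Homotopies of arrows on discs -/

/-- The closed unit disc of a normed space. -/
abbrev dsk (E : Type*) [NormedAddCommGroup E] : Set E := Metric.closedBall 0 1

/-- The unit sphere of a normed space. -/
abbrev sph (E : Type*) [NormedAddCommGroup E] : Set E := Metric.sphere 0 1

/-- Homotopy of maps of arrows `(g1, g0) ≃ (k1, k0)` from the inclusion of the unit sphere in the
unit disc of `E` to `f`. Maps out of the sphere and the disc are encoded as functions on all of `E`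
of which only the restrictions matter, and the time parameter runs through `[0, 1] ⊆ ℝ`. -/
def ArrowHtpy {T T' E : Type*} [TopologicalSpace T] [TopologicalSpace T'] [NormedAddCommGroup E]
    (f : C(T, T')) (g1 : E → T) (g0 : E → T') (k1 : E → T) (k0 : E → T') : Prop :=
  ∃ (H1 : E × ℝ → T) (H0 : E × ℝ → T'),
    ContinuousOn H1 (sph E ×ˢ Set.Icc 0 1) ∧ ContinuousOn H0 (dsk E ×ˢ Set.Icc 0 1) ∧
    (∀ y ∈ sph E, H1 (y, 0) = g1 y) ∧ (∀ y ∈ sph E, H1 (y, 1) = k1 y) ∧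
    (∀ z ∈ dsk E, H0 (z, 0) = g0 z) ∧ (∀ z ∈ dsk E, H0 (z, 1) = k0 z) ∧
    ∀ y ∈ sph E, ∀ t ∈ Set.Icc (0 : ℝ) 1, f (H1 (y, t)) = H0 (y, t)

/-- The square with upper map `g1 : S → T` and lower map `g0 : D → T'` admits a diagonal
`l` up to homotopy of arrows. -/
def Liftable {T T' E : Type*} [TopologicalSpace T] [TopologicalSpace T'] [NormedAddCommGroup E]
    (f : C(T, T')) (g1 : E → T) (g0 : E → T') : Prop :=
  ∃ l : E → T, ContinuousOn l (dsk E) ∧ ArrowHtpy f g1 g0 l (f ∘ l)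

set_option linter.unusedSectionVars false

section
variable {T T' E F Z : Type*} [TopologicalSpace T] [TopologicalSpace T'] [TopologicalSpace Z]
  [NormedAddCommGroup E] [NormedSpace ℝ E] [NormedAddCommGroup F] [NormedSpace ℝ F]

/-- Concatenation of homotopies. -/
lemma continuousOn_concat {α : Type*} [TopologicalSpace α] {A : Set α} (hA : IsClosed A)
    {H K : α × ℝ → Z} (hH : ContinuousOn H (A ×ˢ Set.Icc 0 1))
    (hK : ContinuousOn K (A ×ˢ Set.Icc 0 1)) (hHK : ∀ y ∈ A, H (y, 1) = K (y, 0)) :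
    ContinuousOn (fun p : α × ℝ => if p.2 ≤ 1 / 2 then H (p.1, 2 * p.2) else K (p.1, 2 * p.2 - 1))
      (A ×ˢ Set.Icc 0 1) := by
  have hsplit : A ×ˢ Set.Icc (0 : ℝ) 1 = A ×ˢ Set.Icc (0 : ℝ) (1 / 2) ∪ A ×ˢ Set.Icc (1 / 2) 1 := by
    rw [← Set.prod_union, Set.Icc_union_Icc_eq_Icc] <;> norm_num
  rw [hsplit]
  refine ContinuousOn.union_of_isClosed ?_ ?_ (hA.prod isClosed_Icc) (hA.prod isClosed_Icc)
  · have : ContinuousOn (fun p : α × ℝ => H (p.1, 2 * p.2)) (A ×ˢ Set.Icc 0 (1 / 2)) := by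
      refine hH.comp (by fun_prop) ?_
      rintro ⟨a, t⟩ ⟨ha, h0, h1⟩
      exact ⟨ha, by dsimp only at *; linarith, by dsimp only at *; linarith⟩
    refine this.congr ?_
    rintro ⟨a, t⟩ ⟨ha, h0, h1⟩
    exact if_pos h1
  · have : ContinuousOn (fun p : α × ℝ => K (p.1, 2 * p.2 - 1)) (A ×ˢ Set.Icc (1 / 2) 1) := by
      refine hK.comp (by fun_prop) ?_
      rintro ⟨a, t⟩ ⟨ha, h0, h1⟩
      exact ⟨ha, by dsimp only at *; linarith, by dsimp only at *; linarith⟩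
    refine this.congr ?_
    rintro ⟨a, t⟩ ⟨ha, h0, h1⟩
    dsimp only at *
    split_ifs with h
    · have : t = 1 / 2 := le_antisymm h h0
      subst this
      norm_num
      exact hHK a ha
    · rfl

lemma ArrowHtpy.trans {f : C(T, T')} {g1 h1 k1 : E → T} {g0 h0 k0 : E → T'}
    (h : ArrowHtpy f g1 g0 h1 h0) (k : ArrowHtpy f h1 h0 k1 k0) : ArrowHtpy f g1 g0 k1 k0 := by
  obtain ⟨H1, H0, cH1, cH0, a1, a2, a3, a4, a5⟩ := h
  obtain ⟨K1, K0, cK1, cK0, b1, b2, b3, b4, b5⟩ := k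
  refine ⟨_, _, continuousOn_concat Metric.isClosed_sphere cH1 cK1 fun y hy => by rw [a2 y hy, b1 y hy],
    continuousOn_concat Metric.isClosed_closedBall cH0 cK0 fun y hy => by rw [a4 y hy, b3 y hy],
    fun y hy => ?_, fun y hy => ?_, fun y hy => ?_, fun y hy => ?_, fun y hy t ht => ?_⟩
  · norm_num; exact a1 y hy
  · norm_num; exact b2 y hy
  · norm_num; exact a3 y hy
  · norm_num; exact b4 y hy
  · dsimp only
    obtain ⟨ht0, ht1⟩ := ht
    split_ifs with h
    · exact a5 y hy _ ⟨by linarith, by linarith⟩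
    · exact b5 y hy _ ⟨by linarith, by linarith⟩

lemma ArrowHtpy.liftable {f : C(T, T')} {g1 k1 : E → T} {g0 k0 : E → T'}
    (h : ArrowHtpy f g1 g0 k1 k0) (k : Liftable f k1 k0) : Liftable f g1 g0 :=
  let ⟨l, hl, k'⟩ := k
  ⟨l, hl, h.trans k'⟩

/-! ### Homotopy extension -/

/-- The extension to `D × [0, 1]` of a map `g` on `D × 0` and a homotopy `H` on `S × [0, 1]`:
the disc at time `t` is stretched by the factor `1 + t`, the part leaving `D` being read off
from `H`, with the excess of the norm over `1` as time. -/
def hep (g : E → Z) (H : E × ℝ → Z) (p : E × ℝ) : Z :=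
  if max 1 ((1 + p.2) * ‖p.1‖) = 1 then g ((1 + p.2) • p.1)
  else H (((max 1 ((1 + p.2) * ‖p.1‖))⁻¹ * (1 + p.2)) • p.1, max 1 ((1 + p.2) * ‖p.1‖) - 1)

/-- The homotopy extension property of `(D, S)`. -/
lemma continuousOn_hep {g : E → Z} {H : E × ℝ → Z} (hg : ContinuousOn g (dsk E))
    (hH : ContinuousOn H (sph E ×ˢ Set.Icc 0 1)) (hgH : ∀ y ∈ sph E, H (y, 0) = g y) :
    ContinuousOn (hep g H) (dsk E ×ˢ Set.Icc 0 1) := by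
  let G : E × ℝ → Z := fun p => if p.2 = 0 then g p.1 else H p
  have hG : ContinuousOn G (dsk E ×ˢ {0} ∪ sph E ×ˢ Set.Icc 0 1) := by
    refine ContinuousOn.union_of_isClosed ?_ ?_ (Metric.isClosed_closedBall.prod isClosed_singleton)
      (Metric.isClosed_sphere.prod isClosed_Icc)
    · have : ContinuousOn (fun p : E × ℝ => g p.1) (dsk E ×ˢ {0}) :=
        hg.comp continuous_fst.continuousOn fun p hp => hp.1
      exact this.congr fun p hp => if_pos hp.2
    · refine hH.congr ?_
      rintro ⟨y, t⟩ ⟨hy, ht⟩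
      by_cases h : t = 0
      · subst h; simpa [G] using (hgH y hy).symm
      · simp [G, h]
  have hρ : Continuous (fun p : E × ℝ => ((((max 1 ((1 + p.2) * ‖p.1‖))⁻¹ * (1 + p.2)) • p.1,
      max 1 ((1 + p.2) * ‖p.1‖) - 1) : E × ℝ)) := by
    have : Continuous (fun p : E × ℝ => (max 1 ((1 + p.2) * ‖p.1‖))⁻¹) :=
      Continuous.inv₀ (by fun_prop) fun p => (lt_of_lt_of_le one_pos (le_max_left _ _)).ne'
    fun_prop
  refine (hG.comp hρ.continuousOn ?_).congr ?_
  · rintro ⟨x, t⟩ ⟨hx, ht0, ht1⟩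
    simp only [mem_closedBall_zero_iff] at hx ht0 ht1
    dsimp only
    have hn := norm_nonneg x
    rcases le_total ((1 + t) * ‖x‖) 1 with h | h
    · left
      rw [max_eq_left h]
      simp only [Set.mem_prod, mem_closedBall_zero_iff, norm_smul, Real.norm_eq_abs]
      rw [abs_of_nonneg (by norm_num; linarith)]
      simpa using h
    · right
      rw [max_eq_right h]
      simp only [Set.mem_prod, mem_sphere_zero_iff_norm, norm_smul, Real.norm_eq_abs]
      refine ⟨?_, by simpa using h, by nlinarith⟩
      rw [abs_of_nonneg (by positivity), mul_assoc]
      exact inv_mul_cancel₀ (by linarith)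
  · rintro ⟨x, t⟩ -
    simp only [hep, G, Function.comp, sub_eq_zero]
    split_ifs with h
    · simp [h]
    · rfl

lemma hep_zero {g : E → Z} {H : E × ℝ → Z} {x : E} (hx : x ∈ dsk E) : hep g H (x, 0) = g x := by
  have : ‖x‖ ≤ 1 := by simpa using hx
  simp [hep, this]

lemma hep_sphere {g : E → Z} {H : E × ℝ → Z} (hgH : ∀ y ∈ sph E, H (y, 0) = g y)
    {y : E} (hy : y ∈ sph E) {t : ℝ} (ht : t ∈ Set.Icc (0 : ℝ) 1) : hep g H (y, t) = H (y, t) := by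
  have h1 : ‖y‖ = 1 := by simpa using hy
  have h2 : max 1 (1 + t) = 1 + t := max_eq_right (by linarith [ht.1])
  have h3 : 1 + t ≠ 0 := by linarith [ht.1]
  by_cases h : t = 0
  · subst h; simp [hep, h1, hgH y hy]
  · simp [hep, h1, h2, h3, h]

/-- A homotopy of the upper map of a square extends to a homotopy of arrows. -/
lemma exists_arrowHtpy {f : C(T, T')} {g1 : E → T} {g0 : E → T'} (hg0 : ContinuousOn g0 (dsk E))
    (hg : ∀ y ∈ sph E, f (g1 y) = g0 y) {H1 : E × ℝ → T}
    (hH1 : ContinuousOn H1 (sph E ×ˢ Set.Icc 0 1)) (h0 : ∀ y ∈ sph E, H1 (y, 0) = g1 y) :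
    ∃ k0 : E → T', ContinuousOn k0 (dsk E) ∧ (∀ y ∈ sph E, f (H1 (y, 1)) = k0 y) ∧
      ArrowHtpy f g1 g0 (fun y => H1 (y, 1)) k0 := by
  have hgH : ∀ y ∈ sph E, (f ∘ H1) (y, 0) = g0 y := fun y hy => by
    rw [← hg y hy, ← h0 y hy]; rfl
  have hc := continuousOn_hep hg0 (f.continuous.comp_continuousOn hH1) hgH
  refine ⟨fun x => hep g0 (f ∘ H1) (x, 1), hc.comp (by fun_prop) fun x hx => ⟨hx, by simp⟩,
    fun y hy => (hep_sphere hgH hy (by simp)).symm,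
    H1, hep g0 (f ∘ H1), hH1, hc, h0, fun _ _ => rfl, fun z hz => hep_zero hz, fun _ _ => rfl,
    fun y hy t ht => (hep_sphere hgH hy ht).symm⟩

/-- A diagonal up to homotopy of arrows can be improved to a diagonal `l` whose restriction to the
sphere is the given map, together with a homotopy from `g0` to `f ∘ l` relative to the sphere.
The homotopy on the sphere is inserted in the collar `1 / 2 ≤ ‖x‖ ≤ 1`. -/
lemma Liftable.exists_rel {f : C(T, T')} {g1 : E → T} {g0 : E → T'} (h : Liftable f g1 g0) :
    ∃ (l : E → T) (M : E × ℝ → T'), ContinuousOn l (dsk E) ∧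
      ContinuousOn M (dsk E ×ˢ Set.Icc 0 1) ∧ (∀ y ∈ sph E, l y = g1 y) ∧
      (∀ z ∈ dsk E, M (z, 0) = g0 z) ∧ (∀ z ∈ dsk E, M (z, 1) = f (l z)) ∧
      ∀ y ∈ sph E, ∀ t ∈ Set.Icc (0 : ℝ) 1, M (y, t) = g0 y := by
  obtain ⟨l, hl, H1, H0, cH1, cH0, a1, a2, a3, a4, a5⟩ := h
  have cR : ContinuousOn (fun p : E × ℝ => H1 (p.1, 1 - p.2)) (sph E ×ˢ Set.Icc 0 1) := by
    refine cH1.comp (by fun_prop) ?_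
    rintro ⟨y, t⟩ ⟨hy, ht0, ht1⟩
    exact ⟨hy, by dsimp only at *; linarith, by dsimp only at *; linarith⟩
  have hR : ∀ y ∈ sph E, (fun p : E × ℝ => H1 (p.1, 1 - p.2)) (y, 0) = l y := fun y hy => by
    simpa using a2 y hy
  refine ⟨fun x => hep l (fun p => H1 (p.1, 1 - p.2)) (x, 1),
    fun p => H0 ((max ‖p.1‖ (1 - p.2 / 2))⁻¹ • p.1, 2 - 2 * max ‖p.1‖ (1 - p.2 / 2)),
    (continuousOn_hep hl cR hR).comp (by fun_prop) fun x hx => ⟨hx, by simp⟩, ?_, ?_, ?_, ?_, ?_⟩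
  · refine cH0.comp ?_ ?_
    · have : ContinuousOn (fun p : E × ℝ => (max ‖p.1‖ (1 - p.2 / 2))⁻¹)
          (dsk E ×ˢ Set.Icc 0 1) := by
        refine ContinuousOn.inv₀ (by fun_prop) ?_
        rintro ⟨x, t⟩ ⟨hx, ht0, ht1⟩
        have := le_max_right ‖x‖ (1 - t / 2)
        dsimp only at *
        linarith
      fun_prop
    · rintro ⟨x, t⟩ ⟨hx, ht0, ht1⟩
      simp only [mem_closedBall_zero_iff] at hx ht0 ht1
      have h1 := le_max_right ‖x‖ (1 - t / 2)
      have h2 := le_max_left ‖x‖ (1 - t / 2)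
      have h3 : max ‖x‖ (1 - t / 2) ≤ 1 := max_le hx (by linarith)
      refine ⟨?_, by dsimp only; linarith, by dsimp only; linarith⟩
      simp only [mem_closedBall_zero_iff, norm_smul, norm_inv, Real.norm_eq_abs]
      rw [abs_of_pos (by linarith), inv_mul_le_iff₀ (by linarith)]
      linarith
  · intro y hy
    refine (hep_sphere (H := fun p : E × ℝ => H1 (p.1, 1 - p.2)) hR hy (t := 1) (by simp)).trans ?_
    simpa using a1 y hy
  · intro z hz
    have : ‖z‖ ≤ 1 := by simpa using hz
    simp [this, a3 z hz]
  · intro z hz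
    have hz1 : ‖z‖ ≤ 1 := by simpa using hz
    have hn := norm_nonneg z
    simp only [hep]
    rcases le_total ((1 + 1) * ‖z‖) 1 with h | h
    · have h' : max ‖z‖ (1 - 1 / 2) = 1 / 2 := by
        rw [max_eq_right] <;> linarith
      rw [max_eq_left h, h', if_pos rfl]
      norm_num
      refine a4 _ ?_
      rw [mem_closedBall_zero_iff, norm_smul, Real.norm_eq_abs, abs_of_pos two_pos]
      linarith
    · have h' : max ‖z‖ (1 - 1 / 2) = ‖z‖ := by
        rw [max_eq_left]; linarith
      have hz0 : ‖z‖ ≠ 0 := by intro h0; rw [h0] at h; norm_num at h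
      have hs : ‖z‖⁻¹ • z ∈ sph E := by simp [norm_smul, hz0]
      rw [max_eq_right h, h']
      split_ifs with h2
      · have hz2 : ‖z‖ = 1 / 2 := by linarith
        rw [hz2] at hs ⊢
        norm_num at hs ⊢
        exact a4 _ (Metric.sphere_subset_closedBall (by simpa using hs))
      · rw [mul_inv, mul_assoc, mul_comm ‖z‖⁻¹, ← mul_assoc, inv_mul_cancel₀ (by norm_num), one_mul,
          a5 _ hs _ ⟨by linarith, by linarith⟩]
        congr 2
        ring
  · intro y hy t ht
    have h1 : ‖y‖ = 1 := by simpa using hy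
    have h2 : max 1 (1 - t / 2) = 1 := max_eq_left (by linarith [ht.1])
    simp [h1, h2, a3 y (Metric.sphere_subset_closedBall hy)]

/-- Liftability is transported along homeomorphisms of pairs `(D, S)`; a left inverse of the map of
pairs is enough. -/
lemma Liftable.of_comp {f : C(T, T')} {g1 : E → T} {g0 : E → T'} (Φ : E → F) (Ψ : F → E)
    (hΦ : Continuous Φ) (hD : ∀ x ∈ dsk E, Φ x ∈ dsk F) (hS : ∀ x ∈ sph E, Φ x ∈ sph F)
    (hΨΦ : ∀ x, Ψ (Φ x) = x) (h : Liftable f (g1 ∘ Ψ) (g0 ∘ Ψ)) : Liftable f g1 g0 := by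
  obtain ⟨l, hl, H1, H0, cH1, cH0, a1, a2, a3, a4, a5⟩ := h
  refine ⟨l ∘ Φ, hl.comp hΦ.continuousOn hD, fun p => H1 (Φ p.1, p.2), fun p => H0 (Φ p.1, p.2),
    cH1.comp (by fun_prop) fun p hp => ⟨hS _ hp.1, hp.2⟩,
    cH0.comp (by fun_prop) fun p hp => ⟨hD _ hp.1, hp.2⟩, fun y hy => ?_, fun y hy => ?_,
    fun y hy => ?_, fun y hy => ?_, fun y hy t ht => ?_⟩
  · simp [a1 _ (hS y hy), hΨΦ]
  · simp [a2 _ (hS y hy)]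
  · simp [a3 _ (hD y hy), hΨΦ]
  · simp [a4 _ (hD y hy)]
  · exact a5 _ (hS y hy) t ht

/-- Finite-dimensional normed spaces of equal dimension have homeomorphic pairs of unit disc and
unit sphere. -/
lemma exists_homeo_disc [FiniteDimensional ℝ E] [FiniteDimensional ℝ F]
    (h : Module.finrank ℝ E = Module.finrank ℝ F) :
    ∃ Φ : E ≃ₜ F, (∀ x, Φ x ∈ dsk F ↔ x ∈ dsk E) ∧ (∀ x, Φ x ∈ sph F ↔ x ∈ sph E) := by
  let L : E ≃L[ℝ] F := ContinuousLinearEquiv.ofFinrankEq h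
  let s : Set E := L ⁻¹' Metric.ball 0 1
  have hsb : Bornology.IsVonNBounded ℝ s := by
    have hs : s = L.symm '' Metric.ball 0 1 := (L.image_symm_eq_preimage _).symm
    rw [hs]
    exact (NormedSpace.isVonNBounded_ball ℝ F 1).image (L.symm : F →L[ℝ] E)
  have hso : IsOpen s := Metric.isOpen_ball.preimage L.continuous
  have hsc : Convex ℝ s := (convex_ball (0 : F) 1).is_linear_preimage L.toLinearMap.isLinear
  obtain ⟨e, -, h2, h3⟩ := exists_homeomorph_image_eq (convex_ball (0 : E) 1)
    ⟨0, by simp [Metric.isOpen_ball.interior_eq]⟩ (NormedSpace.isVonNBounded_ball ℝ E 1) hsc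
    ⟨0, by rw [hso.interior_eq]; simp [s]⟩ hsb
  have hcl : closure s = L ⁻¹' dsk F := by
    have := L.toHomeomorph.preimage_closure (Metric.ball (0 : F) 1)
    rw [closure_ball _ one_ne_zero] at this
    exact this.symm
  have hfr : frontier s = L ⁻¹' sph F := by
    have := L.toHomeomorph.preimage_frontier (Metric.ball (0 : F) 1)
    rw [frontier_ball _ one_ne_zero] at this
    exact this.symm
  rw [closure_ball _ one_ne_zero, hcl] at h2
  rw [frontier_ball _ one_ne_zero, hfr] at h3
  refine ⟨e.trans L.toHomeomorph, fun x => ?_, fun x => ?_⟩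
  · change e x ∈ L ⁻¹' dsk F ↔ _
    rw [← h2, e.injective.mem_set_image]
  · change e x ∈ L ⁻¹' sph F ↔ _
    rw [← h3, e.injective.mem_set_image]

lemma Liftable.of_finrank [FiniteDimensional ℝ E] [FiniteDimensional ℝ F]
    (h : Module.finrank ℝ E = Module.finrank ℝ F) {f : C(T, T')}
    (hF : ∀ (g1 : F → T) (g0 : F → T'), ContinuousOn g1 (sph F) → ContinuousOn g0 (dsk F) →
      (∀ y ∈ sph F, f (g1 y) = g0 y) → Liftable f g1 g0)
    (g1 : E → T) (g0 : E → T') (hg1 : ContinuousOn g1 (sph E)) (hg0 : ContinuousOn g0 (dsk E))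
    (hg : ∀ y ∈ sph E, f (g1 y) = g0 y) : Liftable f g1 g0 := by
  obtain ⟨Φ, hD, hS⟩ := exists_homeo_disc h
  have hD' : ∀ x ∈ dsk F, Φ.symm x ∈ dsk E := fun x hx => by rw [← hD]; simpa using hx
  have hS' : ∀ x ∈ sph F, Φ.symm x ∈ sph E := fun x hx => by rw [← hS]; simpa using hx
  exact Liftable.of_comp Φ Φ.symm Φ.continuous (fun x => (hD x).2) (fun x => (hS x).2) (by simp)
    (hF _ _ (hg1.comp Φ.symm.continuous.continuousOn hS')
      (hg0.comp Φ.symm.continuous.continuousOn hD') fun y hy => hg _ (hS' y hy))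

end

/-! ### Liftability from the behaviour on loops -/

section
variable {T T' V E : Type*} [TopologicalSpace T] [TopologicalSpace T']
  [NormedAddCommGroup V] [NormedSpace ℝ V] [NormedAddCommGroup E] [NormedSpace ℝ E]

/-- Triviality of the kernel on homotopy classes of maps `(D, S) → (T, x)`, with `D` the unit disc
of `V`: a nullhomotopy of `f ∘ a` relative to `S` forces one of `a`. -/
def LoopInj (f : C(T, T')) (V : Type*) [NormedAddCommGroup V] : Prop :=
  ∀ (x : T) (a : V → T) (K : V × ℝ → T'), ContinuousOn a (dsk V) → (∀ y ∈ sph V, a y = x) →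
    ContinuousOn K (dsk V ×ˢ Set.Icc 0 1) → (∀ v ∈ dsk V, K (v, 0) = f (a v)) →
    (∀ v ∈ dsk V, K (v, 1) = f x) →
    (∀ y ∈ sph V, ∀ t ∈ Set.Icc (0 : ℝ) 1, K (y, t) = f x) →
    ∃ h : V × ℝ → T, ContinuousOn h (dsk V ×ˢ Set.Icc 0 1) ∧ (∀ v ∈ dsk V, h (v, 0) = a v) ∧
      (∀ v ∈ dsk V, h (v, 1) = x) ∧ ∀ y ∈ sph V, ∀ t ∈ Set.Icc (0 : ℝ) 1, h (y, t) = x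

/-- Liftability of all squares with constant upper map. Such a square amounts to an element of a
homotopy group of `T'`, and a diagonal to a preimage in `T`. -/
def LoopSurj (f : C(T, T')) (E : Type*) [NormedAddCommGroup E] : Prop :=
  ∀ (x : T) (g0 : E → T'), ContinuousOn g0 (dsk E) → (∀ y ∈ sph E, g0 y = f x) →
    Liftable f (fun _ => x) g0

lemma mem_dsk_prod {w : V × ℝ} : w ∈ dsk (V × ℝ) ↔ ‖w.1‖ ≤ 1 ∧ |w.2| ≤ 1 := by
  simp [Prod.norm_def]

lemma mem_sph_prod {w : V × ℝ} :
    w ∈ sph (V × ℝ) ↔ (‖w.1‖ ≤ 1 ∧ |w.2| ≤ 1) ∧ (‖w.1‖ = 1 ∨ w.2 = 1 ∨ w.2 = -1) := by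
  rw [mem_sphere_zero_iff_norm, Prod.norm_def, Real.norm_eq_abs, ← abs_eq zero_le_one]
  constructor
  · intro h
    refine ⟨max_le_iff.1 h.le, ?_⟩
    rcases max_choice ‖w.1‖ |w.2| with h' | h' <;> rw [h'] at h <;> simp [h]
  · rintro ⟨⟨h1, h2⟩, h | h⟩
    · rw [h]; exact max_eq_left h2
    · rw [h]; exact max_eq_right h1

/-- The height at the end of the deformation `sphereFlow`: it equals `-1` on all of the sphere
except on the interior of the top face. -/
def flowHeight (w : V × ℝ) : ℝ := max (-1) (w.2 - 2 * ‖w.1‖)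

/-- A straight-line deformation of the sphere of `V × ℝ` which avoids the origin, starts at the
identity and ends with a map sending the sides and the bottom of the cylinder to `(0, -1)`. -/
def sphereFlow (p : (V × ℝ) × ℝ) : V × ℝ :=
  ((1 + p.2 * flowHeight p.1) • p.1.1, (1 - p.2) * p.1.2 + p.2 * flowHeight p.1)

lemma continuous_sphereFlow : Continuous (sphereFlow (V := V)) := by
  unfold sphereFlow flowHeight
  fun_prop

lemma sphereFlow_zero (w : V × ℝ) : sphereFlow (w, 0) = w := by simp [sphereFlow]

/-- Hence the deformation can be projected radially back to the sphere. -/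
lemma sphereFlow_ne_zero {w : V × ℝ} (hw : w ∈ sph (V × ℝ)) {t : ℝ} (ht : t ∈ Set.Icc (0 : ℝ) 1) :
    sphereFlow (w, t) ≠ 0 := by
  obtain ⟨v, s⟩ := w
  rw [mem_sph_prod] at hw
  obtain ⟨⟨hv, hs⟩, hw⟩ := hw
  obtain ⟨ht0, ht1⟩ := ht
  dsimp only at *
  intro h0
  obtain ⟨h1, h2⟩ := Prod.mk_eq_zero.1 h0
  have hθ : -1 ≤ flowHeight (v, s) := le_max_left _ _
  dsimp only at h1 h2
  rcases smul_eq_zero.1 h1 with h | h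
    -- the factor of `v` vanishes only for `t = 1` and height `-1`
  · have h3 : t * flowHeight (v, s) = -1 := by linarith
    have h4 : t = 1 := by nlinarith
    rw [h4] at h2 h3
    linarith
  · subst h
    simp only [norm_zero, zero_ne_one, false_or] at hw
    have h5 : flowHeight ((0 : V), s) = s := by
      simp only [flowHeight, norm_zero]
      rw [max_eq_right] <;> rcases hw with h | h <;> linarith
    rw [h5] at h2
    have : s = 0 := by linarith
    rcases hw with h | h <;> linarith

lemma sphereFlow_one {w : V × ℝ} (hw : w ∈ sph (V × ℝ)) (h : ‖w.1‖ = 1 ∨ w.2 = -1) :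
    sphereFlow (w, 1) = (0, -1) := by
  have h1 : flowHeight w = -1 := by
    refine max_eq_left ?_
    obtain ⟨⟨-, hs⟩, -⟩ := mem_sph_prod.1 hw
    have := le_of_abs_le hs
    have := norm_nonneg w.1
    rcases h with h | h <;> linarith
  simp [sphereFlow, h1]

/-- If the upper map of a square extends over the disc, the contraction of the disc deforms it to
a constant map. -/
lemma LoopSurj.liftable_of_extends {f : C(T, T')} (hA : LoopSurj f E) {g1 : E → T} {g0 : E → T'}
    (hg0 : ContinuousOn g0 (dsk E)) (hg : ∀ y ∈ sph E, f (g1 y) = g0 y) {h : E → T}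
    (hh : ContinuousOn h (dsk E)) (hg1 : ∀ y ∈ sph E, h y = g1 y) : Liftable f g1 g0 := by
  obtain ⟨k0, hk0, hk, hgk⟩ := exists_arrowHtpy hg0 hg
    (H1 := fun p : E × ℝ => h ((1 - p.2) • p.1))
    (by
      refine hh.comp (by fun_prop) ?_
      rintro ⟨y, t⟩ ⟨hy, ht0, ht1⟩
      have hy1 : ‖y‖ = 1 := by simpa using hy
      dsimp only at *
      rw [mem_closedBall_zero_iff, norm_smul, hy1, Real.norm_eq_abs, mul_one, abs_le]
      constructor <;> linarith)
    (fun y hy => by simpa using hg1 y hy)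
  simp only [sub_self, zero_smul] at hk hgk
  exact hgk.liftable (hA (h 0) k0 hk0 fun y hy => (hk y hy).symm)

/-- The geometric heart of the argument, on the cylinder `D × [-1, 1]`: after deforming the upper
map to be constant off the top face, it extends over the disc by `LoopInj`. -/
lemma liftable_prod {f : C(T, T')} (hB : LoopInj f V) (hA : LoopSurj f (V × ℝ))
    {g1 : V × ℝ → T} {g0 : V × ℝ → T'} (hg1 : ContinuousOn g1 (sph (V × ℝ)))
    (hg0 : ContinuousOn g0 (dsk (V × ℝ))) (hg : ∀ y ∈ sph (V × ℝ), f (g1 y) = g0 y) :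
    Liftable f g1 g0 := by
  let H1 : (V × ℝ) × ℝ → T := fun p => g1 (‖sphereFlow p‖⁻¹ • sphereFlow p)
  have hH1 : ContinuousOn H1 (sph (V × ℝ) ×ˢ Set.Icc 0 1) := by
    have hne : ∀ p ∈ sph (V × ℝ) ×ˢ Set.Icc (0 : ℝ) 1, ‖sphereFlow p‖ ≠ 0 := fun p hp =>
      norm_ne_zero_iff.2 (sphereFlow_ne_zero hp.1 hp.2)
    refine hg1.comp ?_ fun p hp => ?_
    · exact (continuous_sphereFlow.norm.continuousOn.inv₀ hne).smul
        continuous_sphereFlow.continuousOn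
    · rw [mem_sphere_zero_iff_norm, norm_smul, norm_inv, norm_norm, inv_mul_cancel₀ (hne p hp)]
  obtain ⟨k0, hk0, hk, hgk⟩ := exists_arrowHtpy hg0 hg hH1 (fun y hy => by
    have hy1 : ‖y‖ = 1 := by simpa using hy
    simp [H1, sphereFlow_zero, hy1])
  refine hgk.liftable ?_
  set k1 : V × ℝ → T := fun y => H1 (y, 1) with hk1
  have hk1c : ContinuousOn k1 (sph (V × ℝ)) := hH1.comp (by fun_prop) fun y hy => ⟨hy, by simp⟩
  have hk1x : ∀ y ∈ sph (V × ℝ), (‖y.1‖ = 1 ∨ y.2 = -1) → k1 y = g1 (0, -1) := fun y hy h => by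
    simp [hk1, H1, sphereFlow_one hy h, Prod.norm_def]
  have htop : ∀ v ∈ dsk V, ((v, 1) : V × ℝ) ∈ sph (V × ℝ) := fun v hv =>
    mem_sph_prod.2 ⟨⟨by simpa using hv, by simp⟩, by simp⟩
  have hbot : ∀ v ∈ dsk V, ((v, -1) : V × ℝ) ∈ sph (V × ℝ) := fun v hv =>
    mem_sph_prod.2 ⟨⟨by simpa using hv, by simp⟩, by simp⟩
  have hside : ∀ v ∈ sph V, ∀ s : ℝ, |s| ≤ 1 → ((v, s) : V × ℝ) ∈ sph (V × ℝ) := fun v hv s hs => by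
    have : ‖v‖ = 1 := by simpa using hv
    exact mem_sph_prod.2 ⟨⟨this.le, hs⟩, Or.inl this⟩
  -- `k0` restricted to the vertical lines is a nullhomotopy of `f ∘ k1` on the top face
  obtain ⟨h, hh, h0, h1, h2⟩ := hB (g1 (0, -1)) (fun v => k1 (v, 1))
    (fun p => k0 (p.1, 1 - 2 * p.2)) (hk1c.comp (by fun_prop) htop)
    (fun y hy => hk1x _ (htop y (Metric.sphere_subset_closedBall hy))
      (Or.inl (by simpa using hy)))
    (by
      refine hk0.comp (by fun_prop) ?_
      rintro ⟨v, t⟩ ⟨hv, ht0, ht1⟩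
      dsimp only at *
      exact mem_dsk_prod.2 ⟨by simpa using hv, abs_le.2 ⟨by dsimp only; linarith,
        by dsimp only; linarith⟩⟩)
    (fun v hv => by simpa using (hk _ (htop v hv)).symm)
    (fun v hv => by
      have := hk _ (hbot v hv)
      rw [show H1 ((v, -1), 1) = g1 (0, -1) from hk1x _ (hbot v hv) (Or.inr rfl)] at this
      norm_num [this])
    (fun v hv t ht => by
      have hs := hside v hv (1 - 2 * t) (abs_le.2 ⟨by linarith [ht.2], by linarith [ht.1]⟩)
      have := hk _ hs
      rw [show H1 ((v, 1 - 2 * t), 1) = g1 (0, -1) from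
        hk1x _ hs (Or.inl (by simpa using hv))] at this
      exact this.symm)
  refine hA.liftable_of_extends hk0 hk (h := fun w => h (w.1, (1 - w.2) / 2)) ?_ ?_
  · refine hh.comp (by fun_prop) fun w hw => ?_
    obtain ⟨hw1, hw2⟩ := mem_dsk_prod.1 hw
    obtain ⟨h3, h4⟩ := abs_le.1 hw2
    exact ⟨by simpa using hw1, by dsimp only; linarith, by dsimp only; linarith⟩
  · rintro ⟨v, s⟩ hw
    obtain ⟨⟨hv, hs⟩, hc⟩ := mem_sph_prod.1 hw
    obtain ⟨h3, h4⟩ := abs_le.1 hs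
    dsimp only at *
    rcases hc with hc | rfl | rfl
    · rw [hk1x _ hw (Or.inl hc)]
      exact h2 v (by simpa using hc) _ ⟨by linarith, by linarith⟩
    · simpa using h0 v (by simpa using hv)
    · rw [hk1x _ hw (Or.inr rfl)]
      norm_num
      exact h1 v (by simpa using hv)

lemma LoopSurj.of_finrank [FiniteDimensional ℝ E] [FiniteDimensional ℝ V]
    (h : Module.finrank ℝ E = Module.finrank ℝ V) {f : C(T, T')} (hV : LoopSurj f V) :
    LoopSurj f E := by
  intro x g0 hg0 hg
  obtain ⟨Φ, hD, hS⟩ := exists_homeo_disc h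
  exact Liftable.of_comp Φ Φ.symm Φ.continuous (fun x => (hD x).2) (fun x => (hS x).2) (by simp)
    (hV x _ (hg0.comp Φ.symm.continuous.continuousOn fun x hx => by rw [← hD]; simpa using hx)
      fun y hy => hg _ (by rw [← hS]; simpa using hy))

end

/-! ### Generalized loops as maps on the disc of the sup norm -/

section
variable {T T' : Type*} [TopologicalSpace T] [TopologicalSpace T'] {n : ℕ}

/-- The affine identification of the cube `[0, 1]ⁿ` with the unit disc `[-1, 1]ⁿ` of the
sup norm. -/
def cubeToDisc (y : Fin n → unitInterval) : Fin n → ℝ := fun i => 2 * (y i : ℝ) - 1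

/-- The inverse of `cubeToDisc` on the unit disc, with coordinates clamped outside. -/
def discToCube (v : Fin n → ℝ) : Fin n → unitInterval :=
  fun i => Set.projIcc 0 1 zero_le_one ((v i + 1) / 2)

@[fun_prop]
lemma continuous_cubeToDisc : Continuous (cubeToDisc (n := n)) := by
  unfold cubeToDisc; fun_prop

@[fun_prop]
lemma continuous_discToCube : Continuous (discToCube (n := n)) :=
  continuous_pi fun i => continuous_projIcc.comp (by fun_prop)

lemma discToCube_cubeToDisc (y : Fin n → unitInterval) : discToCube (cubeToDisc y) = y := by
  funext i
  simp only [discToCube, cubeToDisc]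
  rw [show (2 * (y i : ℝ) - 1 + 1) / 2 = y i by ring]
  exact Set.projIcc_val _ _

lemma mem_dsk_pi {v : Fin n → ℝ} : v ∈ dsk (Fin n → ℝ) ↔ ∀ i, |v i| ≤ 1 := by
  rw [mem_closedBall_zero_iff, pi_norm_le_iff_of_nonneg zero_le_one]
  rfl

lemma mem_sph_pi {v : Fin n → ℝ} :
    v ∈ sph (Fin n → ℝ) ↔ v ∈ dsk (Fin n → ℝ) ∧ ∃ i, |v i| = 1 := by
  constructor
  · refine fun h => ⟨Metric.sphere_subset_closedBall h, ?_⟩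
    by_contra! hne
    have h1 := mem_dsk_pi.1 (Metric.sphere_subset_closedBall h)
    have : ‖v‖ < 1 := (pi_norm_lt_iff one_pos).2 fun i => lt_of_le_of_ne (h1 i) (hne i)
    rw [mem_sphere_zero_iff_norm] at h
    linarith
  · rintro ⟨h, i, hi⟩
    rw [mem_sphere_zero_iff_norm]
    exact le_antisymm (by simpa using h) (hi.symm.le.trans (norm_le_pi_norm v i))

lemma cubeToDisc_mem (y : Fin n → unitInterval) : cubeToDisc y ∈ dsk (Fin n → ℝ) :=
  mem_dsk_pi.2 fun i => abs_le.2
    ⟨by simp only [cubeToDisc]; linarith [(y i).2.1], by simp only [cubeToDisc]; linarith [(y i).2.2]⟩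

lemma cubeToDisc_mem_sph {y : Fin n → unitInterval} :
    cubeToDisc y ∈ sph (Fin n → ℝ) ↔ y ∈ Cube.boundary (Fin n) := by
  rw [mem_sph_pi, and_iff_right (cubeToDisc_mem y)]
  refine exists_congr fun i => ?_
  rw [abs_eq zero_le_one, or_comm]
  simp only [cubeToDisc, Subtype.ext_iff, Set.Icc.coe_zero, Set.Icc.coe_one]
  constructor <;> rintro (h | h) <;> [left; right; left; right] <;> linarith

lemma cubeToDisc_discToCube {v : Fin n → ℝ} (hv : v ∈ dsk (Fin n → ℝ)) :
    cubeToDisc (discToCube v) = v := by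
  funext i
  obtain ⟨h1, h2⟩ := abs_le.1 (mem_dsk_pi.1 hv i)
  simp only [discToCube, cubeToDisc]
  rw [Set.projIcc_of_mem _ (⟨by linarith, by linarith⟩ : (v i + 1) / 2 ∈ Set.Icc (0 : ℝ) 1)]
  dsimp only
  ring

lemma discToCube_mem_boundary {v : Fin n → ℝ} (hv : v ∈ sph (Fin n → ℝ)) :
    discToCube v ∈ Cube.boundary (Fin n) := by
  rw [← cubeToDisc_mem_sph, cubeToDisc_discToCube (Metric.sphere_subset_closedBall hv)]
  exact hv

/-- The generalized loop given by a map on the disc which is constant on the sphere. -/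
def loopOfDisc (x : T) (a : (Fin n → ℝ) → T) (ha : ContinuousOn a (dsk (Fin n → ℝ)))
    (hx : ∀ y ∈ sph (Fin n → ℝ), a y = x) : GenLoop (Fin n) T x :=
  ⟨⟨fun y => a (cubeToDisc y), ha.comp_continuous continuous_cubeToDisc cubeToDisc_mem⟩,
    fun _ hy => hx _ (cubeToDisc_mem_sph.2 hy)⟩

lemma continuousOn_comp_disc (p : C(Fin n → unitInterval, T)) (s : Set (Fin n → ℝ)) :
    ContinuousOn (fun v => p (discToCube v)) s :=
  (p.continuous.comp continuous_discToCube).continuousOn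

/-- Homotopy of generalized loops in terms of homotopies on the disc relative to the sphere. -/
lemma homotopic_iff {x : T} (p q : GenLoop (Fin n) T x) :
    GenLoop.Homotopic p q ↔ ∃ K : (Fin n → ℝ) × ℝ → T,
      ContinuousOn K (dsk (Fin n → ℝ) ×ˢ Set.Icc 0 1) ∧
      (∀ v ∈ dsk (Fin n → ℝ), K (v, 0) = p.1 (discToCube v)) ∧
      (∀ v ∈ dsk (Fin n → ℝ), K (v, 1) = q.1 (discToCube v)) ∧
      ∀ y ∈ sph (Fin n → ℝ), ∀ t ∈ Set.Icc (0 : ℝ) 1, K (y, t) = x := by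
  constructor
  · rintro ⟨H⟩
    refine ⟨fun w => H (Set.projIcc 0 1 zero_le_one w.2, discToCube w.1), ?_, ?_, ?_, ?_⟩
    · refine Continuous.continuousOn (H.continuous.comp ?_)
      exact (continuous_projIcc.comp continuous_snd).prodMk
        (continuous_discToCube.comp continuous_fst)
    · intro v _
      simp
    · intro v _
      simp
    · intro y hy t _
      exact (H.eq_fst _ (discToCube_mem_boundary hy)).trans (p.2 _ (discToCube_mem_boundary hy))
  · rintro ⟨K, hK, h0, h1, h2⟩
    refine ⟨⟨⟨⟨fun w => K (cubeToDisc w.2, w.1), ?_⟩, fun y => ?_, fun y => ?_⟩, fun t y hy => ?_⟩⟩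
    · exact hK.comp_continuous (by fun_prop) fun w => ⟨cubeToDisc_mem _, w.1.2⟩
    · simpa [discToCube_cubeToDisc] using h0 _ (cubeToDisc_mem y)
    · simpa [discToCube_cubeToDisc] using h1 _ (cubeToDisc_mem y)
    · exact (h2 _ (cubeToDisc_mem_sph.2 hy) _ t.2).trans (p.2 y hy).symm

lemma homotopyGroupMap_mk (f : C(T, T')) (x : T) (p : GenLoop (Fin n) T x) :
    homotopyGroupMap (Fin n) f x (Quotient.mk _ p) = Quotient.mk _ (genLoopMap (Fin n) f x p) :=
  rfl

lemma loopInj_of_injective {f : C(T, T')}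
    (h : ∀ x : T, Function.Injective (homotopyGroupMap (Fin n) f x)) :
    LoopInj f (Fin n → ℝ) := by
  intro x a K ha hax hK h0 h1 h2
  have hom : GenLoop.Homotopic (loopOfDisc x a ha hax) GenLoop.const := by
    refine Quotient.exact (h x ?_)
    rw [homotopyGroupMap_mk, homotopyGroupMap_mk]
    refine Quotient.sound ((homotopic_iff _ _).2 ⟨K, hK, fun v hv => ?_, fun v hv => h1 v hv, h2⟩)
    rw [h0 v hv]
    change _ = f (a (cubeToDisc (discToCube v)))
    rw [cubeToDisc_discToCube hv]
  obtain ⟨L, hL, l0, l1, l2⟩ := (homotopic_iff _ _).1 hom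
  refine ⟨L, hL, fun v hv => ?_, l1, l2⟩
  rw [l0 v hv]
  change a (cubeToDisc (discToCube v)) = _
  rw [cubeToDisc_discToCube hv]

lemma loopSurj_of_surjective {f : C(T, T')}
    (h : ∀ x : T, Function.Surjective (homotopyGroupMap (Fin n) f x)) :
    LoopSurj f (Fin n → ℝ) := by
  intro x g0 hg0 hgx
  obtain ⟨⟨p⟩, hp⟩ := h x (Quotient.mk _ (loopOfDisc (f x) g0 hg0 hgx))
  have hom : GenLoop.Homotopic (loopOfDisc (f x) g0 hg0 hgx) (genLoopMap (Fin n) f x p) :=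
    Quotient.exact hp.symm
  obtain ⟨K, hK, h0, h1, h2⟩ := (homotopic_iff _ _).1 hom
  refine ⟨fun v => p.1 (discToCube v), continuousOn_comp_disc _ _, fun _ => x, K,
    continuousOn_const, hK, fun _ _ => rfl,
    fun y hy => (p.2 _ (discToCube_mem_boundary hy)).symm, fun v hv => ?_, h1,
    fun y hy t ht => (h2 y hy t ht).symm⟩
  rw [h0 v hv]
  change g0 (cubeToDisc (discToCube v)) = _
  rw [cubeToDisc_discToCube hv]

/-- Based loops indexed by `Fin 0` are points, and their homotopies are paths. -/
lemma homotopic_zero_iff {x : T} (p q : GenLoop (Fin 0) T x) :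
    GenLoop.Homotopic p q ↔ Joined (p.1 default) (q.1 default) := by
  constructor
  · rintro ⟨H⟩
    exact ⟨⟨⟨fun t => H (t, default), by fun_prop⟩, by simp, by simp⟩⟩
  · rintro ⟨γ⟩
    refine ⟨⟨⟨⟨fun w => γ w.1, by fun_prop⟩, fun y => ?_, fun y => ?_⟩, fun t y ⟨i, _⟩ => i.elim0⟩⟩
    · simp [Subsingleton.elim y default]
    · simp [Subsingleton.elim y default]

/-- Injectivity on `π₀` is the case `n = 0` of injectivity on `πₙ` at all basepoints. -/
lemma homotopyGroupMap_zero_injective_iff (f : C(T, T')) :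
    (∀ x : T, Function.Injective (homotopyGroupMap (Fin 0) f x)) ↔
      Function.Injective (zerothHomotopyMap f) := by
  constructor
  · rintro h ⟨a⟩ ⟨b⟩ hab
    have hab' : Joined (f a) (f b) := @Quotient.exact _ (pathSetoid T') _ _ hab
    let p : T → GenLoop (Fin 0) T a := fun z => ⟨ContinuousMap.const _ z, fun _ ⟨i, _⟩ => i.elim0⟩
    have hpq : GenLoop.Homotopic (p a) (p b) := by
      refine Quotient.exact (h a ?_)
      rw [homotopyGroupMap_mk, homotopyGroupMap_mk]
      exact Quotient.sound ((homotopic_zero_iff _ _).2 hab')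
    exact @Quotient.sound _ (pathSetoid T) _ _ ((homotopic_zero_iff _ _).1 hpq)
  · rintro h x ⟨p⟩ ⟨q⟩ hpq
    have hpq' : GenLoop.Homotopic (genLoopMap (Fin 0) f x p) (genLoopMap (Fin 0) f x q) :=
      Quotient.exact hpq
    have : Joined (p.1 default) (q.1 default) :=
      @Quotient.exact _ (pathSetoid T) _ _
        (h (@Quotient.sound _ (pathSetoid T') _ _ ((homotopic_zero_iff _ _).1 hpq')))
    exact Quotient.sound ((homotopic_zero_iff _ _).2 this)

end

/-! ### Homotopy groups from liftability -/

section
variable {T T' : Type*} [TopologicalSpace T] [TopologicalSpace T'] {n : ℕ}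

/-- The relative diagonal of a square with constant upper map is a preimage on `πₙ`. -/
lemma homotopyGroupMap_surjective {f : C(T, T')}
    (hL : ∀ (g1 : (Fin n → ℝ) → T) (g0 : (Fin n → ℝ) → T'), ContinuousOn g1 (sph (Fin n → ℝ)) →
      ContinuousOn g0 (dsk (Fin n → ℝ)) → (∀ y ∈ sph (Fin n → ℝ), f (g1 y) = g0 y) →
      Liftable f g1 g0) (x : T) :
    Function.Surjective (homotopyGroupMap (Fin n) f x) := by
  rintro ⟨p⟩
  obtain ⟨l, M, hl, hM, h1, m0, m1, m2⟩ := (hL (fun _ => x) (fun v => p.1 (discToCube v))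
    continuousOn_const (continuousOn_comp_disc _ _)
    fun y hy => (p.2 _ (discToCube_mem_boundary hy)).symm).exists_rel
  refine ⟨Quotient.mk _ (loopOfDisc x l hl h1), ?_⟩
  rw [homotopyGroupMap_mk]
  refine (Quotient.sound ((homotopic_iff _ _).2 ⟨M, hM, m0, fun v hv => ?_, fun y hy t ht => ?_⟩)).symm
  · rw [m1 v hv]
    change _ = f (l (cubeToDisc (discToCube v)))
    rw [cubeToDisc_discToCube hv]
  · rw [m2 y hy t ht]
    exact p.2 _ (discToCube_mem_boundary hy)

/-- The relative diagonal of a square on the cylinder is a homotopy between the two loops prescribed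
on its bottom and its top. -/
lemma homotopyGroupMap_injective {f : C(T, T')}
    (hL : ∀ (g1 : (Fin n → ℝ) × ℝ → T) (g0 : (Fin n → ℝ) × ℝ → T'),
      ContinuousOn g1 (sph ((Fin n → ℝ) × ℝ)) → ContinuousOn g0 (dsk ((Fin n → ℝ) × ℝ)) →
      (∀ y ∈ sph ((Fin n → ℝ) × ℝ), f (g1 y) = g0 y) → Liftable f g1 g0) (x : T) :
    Function.Injective (homotopyGroupMap (Fin n) f x) := by
  rintro ⟨p⟩ ⟨q⟩ hpq
  have hpq' : GenLoop.Homotopic (genLoopMap (Fin n) f x p) (genLoopMap (Fin n) f x q) :=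
    Quotient.exact hpq
  obtain ⟨K, hK, k0, k1, k2⟩ := (homotopic_iff _ _).1 hpq'
  -- the boundary of the cylinder: `p` at the bottom, `q` at the top, `x` on the sides
  let g1 : (Fin n → ℝ) × ℝ → T := fun w =>
    if w.2 = -1 then p.1 (discToCube w.1) else if w.2 = 1 then q.1 (discToCube w.1) else x
  have hbot : ∀ v, g1 (v, -1) = p.1 (discToCube v) := fun v => if_pos rfl
  have htop : ∀ v, g1 (v, 1) = q.1 (discToCube v) := fun v => by
    simp only [g1]
    rw [if_neg (by norm_num), if_pos trivial]
  have hside : ∀ v ∈ sph (Fin n → ℝ), ∀ s, g1 (v, s) = x := fun v hv s => by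
    simp only [g1]
    split_ifs
    · exact p.2 _ (discToCube_mem_boundary hv)
    · exact q.2 _ (discToCube_mem_boundary hv)
    · rfl
  have hsub : sph ((Fin n → ℝ) × ℝ) ⊆ (dsk (Fin n → ℝ) ×ˢ {-1} ∪ dsk (Fin n → ℝ) ×ˢ {1}) ∪
      sph (Fin n → ℝ) ×ˢ Set.Icc (-1) 1 := by
    rintro ⟨v, s⟩ hw
    obtain ⟨⟨hv, hs⟩, hc⟩ := mem_sph_prod.1 hw
    dsimp only at *
    rcases hc with hc | hc | hc
    · exact Or.inr ⟨by simpa using hc, abs_le.1 hs⟩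
    · exact Or.inl (Or.inr ⟨by simpa using hv, hc⟩)
    · exact Or.inl (Or.inl ⟨by simpa using hv, hc⟩)
  have hcp : ∀ r : C(Fin n → unitInterval, T),
      Continuous (fun w : (Fin n → ℝ) × ℝ => r (discToCube w.1)) := fun r => by fun_prop
  have hg1 : ContinuousOn g1 (sph ((Fin n → ℝ) × ℝ)) := by
    refine ContinuousOn.mono ?_ hsub
    refine ContinuousOn.union_of_isClosed (ContinuousOn.union_of_isClosed ?_ ?_
      (Metric.isClosed_closedBall.prod isClosed_singleton)
      (Metric.isClosed_closedBall.prod isClosed_singleton)) ?_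
      ((Metric.isClosed_closedBall.prod isClosed_singleton).union
      (Metric.isClosed_closedBall.prod isClosed_singleton))
      (Metric.isClosed_sphere.prod isClosed_Icc)
    · refine (hcp p.1).continuousOn.congr ?_
      rintro ⟨v, s⟩ ⟨-, rfl⟩
      exact hbot v
    · refine (hcp q.1).continuousOn.congr ?_
      rintro ⟨v, s⟩ ⟨-, rfl⟩
      exact htop v
    · exact (continuousOn_const (c := x)).congr fun w hw => hside w.1 hw.1 w.2
  obtain ⟨l, -, hl, -, h1, -⟩ := (hL g1 (fun w => K (w.1, (w.2 + 1) / 2)) hg1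
    (by
      refine hK.comp (by fun_prop) fun w hw => ?_
      obtain ⟨hw1, hw2⟩ := mem_dsk_prod.1 hw
      obtain ⟨h3, h4⟩ := abs_le.1 hw2
      exact ⟨by simpa using hw1, by dsimp only; linarith, by dsimp only; linarith⟩)
    (by
      intro w hw
      rcases hsub hw with (⟨hv, hs⟩ | ⟨hv, hs⟩) | ⟨hv, hs⟩ <;> obtain ⟨v, s⟩ := w <;>
        dsimp only at *
      · obtain rfl : s = -1 := hs
        rw [hbot]
        norm_num
        exact (k0 v hv).symm
      · obtain rfl : s = 1 := hs
        rw [htop]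
        norm_num
        exact (k1 v hv).symm
      · rw [hside v hv, k2 v hv _ ⟨by linarith [hs.1], by linarith [hs.2]⟩])).exists_rel
  refine Quotient.sound ((homotopic_iff _ _).2 ⟨fun w => l (w.1, 2 * w.2 - 1), ?_, ?_, ?_, ?_⟩)
  · refine hl.comp (by fun_prop) ?_
    rintro ⟨v, t⟩ ⟨hv, ht0, ht1⟩
    dsimp only at *
    exact mem_dsk_prod.2 ⟨by simpa using hv, abs_le.2 ⟨by dsimp only; linarith,
      by dsimp only; linarith⟩⟩
  · intro v hv
    norm_num
    rw [h1 _ (mem_sph_prod.2 ⟨⟨by simpa using hv, by simp⟩, by simp⟩), hbot]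
    rfl
  · intro v hv
    norm_num
    rw [h1 _ (mem_sph_prod.2 ⟨⟨by simpa using hv, by simp⟩, by simp⟩), htop]
    rfl
  · intro v hv t ht
    have hv1 : ‖v‖ = 1 := by simpa using hv
    dsimp only
    rw [h1 _ (mem_sph_prod.2 ⟨⟨hv1.le, abs_le.2 ⟨by dsimp only; linarith [ht.1],
      by dsimp only; linarith [ht.2]⟩⟩, Or.inl hv1⟩), hside v hv]

end

/-! ### Squares on subtypes -/

section
variable {T T' : Type*} [TopologicalSpace T] [TopologicalSpace T']

/-- The lifting condition for the pair `(Dᵐ, Sᵐ⁻¹)`, stated with maps on subtypes. -/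
def DiscLifting (f : C(T, T')) (m : ℕ) : Prop :=
  ∀ (g1 : Metric.sphere (0 : EuclideanSpace ℝ (Fin m)) 1 → T)
    (g0 : Metric.closedBall (0 : EuclideanSpace ℝ (Fin m)) 1 → T'),
    Continuous g1 → Continuous g0 →
    (∀ y, f (g1 y) = g0 ⟨y.1, Metric.sphere_subset_closedBall y.2⟩) →
    ∃ l : Metric.closedBall (0 : EuclideanSpace ℝ (Fin m)) 1 → T,
      Continuous l ∧
      ∃ H1 : Metric.sphere (0 : EuclideanSpace ℝ (Fin m)) 1 × unitInterval → T,
      ∃ H0 : Metric.closedBall (0 : EuclideanSpace ℝ (Fin m)) 1 × unitInterval → T',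
        Continuous H1 ∧ Continuous H0 ∧
        (∀ y, H1 (y, 0) = g1 y) ∧
        (∀ y, H1 (y, 1) = l ⟨y.1, Metric.sphere_subset_closedBall y.2⟩) ∧
        (∀ z, H0 (z, 0) = g0 z) ∧
        (∀ z, H0 (z, 1) = f (l z)) ∧
        (∀ y t, f (H1 (y, t)) = H0 (⟨y.1, Metric.sphere_subset_closedBall y.2⟩, t))

/-- A continuous map on a subset is the restriction of a function on the whole space. -/
lemma exists_extend {α Z : Type*} [TopologicalSpace α] [TopologicalSpace Z] [Nonempty Z] {s : Set α}
    {g : s → Z} (hg : Continuous g) :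
    ∃ G : α → Z, ContinuousOn G s ∧ ∀ (x : α) (hx : x ∈ s), G x = g ⟨x, hx⟩ := by
  classical
  let G : α → Z := fun x => if h : x ∈ s then g ⟨x, h⟩ else Classical.arbitrary Z
  have hG : ∀ (x : α) (hx : x ∈ s), G x = g ⟨x, hx⟩ := fun x hx => dif_pos hx
  refine ⟨G, ?_, hG⟩
  rw [continuousOn_iff_continuous_domRestrict]
  exact hg.congr fun x => (hG x.1 x.2).symm

/-- The space `T` has to be inhabited, as `Liftable` speaks of functions on all of `E`. -/
lemma discLifting_iff [Nonempty T] (f : C(T, T')) (m : ℕ) :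
    DiscLifting f m ↔ ∀ (g1 : EuclideanSpace ℝ (Fin m) → T) (g0 : EuclideanSpace ℝ (Fin m) → T'),
      ContinuousOn g1 (sph (EuclideanSpace ℝ (Fin m))) →
      ContinuousOn g0 (dsk (EuclideanSpace ℝ (Fin m))) →
      (∀ y ∈ sph (EuclideanSpace ℝ (Fin m)), f (g1 y) = g0 y) → Liftable f g1 g0 := by
  have : Nonempty T' := Nonempty.map f inferInstance
  constructor
  · intro h g1 g0 hg1 hg0 hg
    obtain ⟨l, hl, H1, H0, cH1, cH0, a1, a2, a3, a4, a5⟩ := h (fun y => g1 y) (fun z => g0 z)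
      (continuousOn_iff_continuous_domRestrict.1 hg1) (continuousOn_iff_continuous_domRestrict.1 hg0)
      fun y => hg y y.2
    obtain ⟨L, cL, hL⟩ := exists_extend hl
    obtain ⟨K1, cK1, hK1⟩ := exists_extend
      (g := fun p : ((sph (EuclideanSpace ℝ (Fin m)) ×ˢ Set.Icc 0 1 :
        Set (EuclideanSpace ℝ (Fin m) × ℝ))) => H1 (⟨p.1.1, p.2.1⟩, ⟨p.1.2, p.2.2⟩))
      (by fun_prop)
    obtain ⟨K0, cK0, hK0⟩ := exists_extend
      (g := fun p : ((dsk (EuclideanSpace ℝ (Fin m)) ×ˢ Set.Icc 0 1 :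
        Set (EuclideanSpace ℝ (Fin m) × ℝ))) => H0 (⟨p.1.1, p.2.1⟩, ⟨p.1.2, p.2.2⟩))
      (by fun_prop)
    have i0 : (0 : ℝ) ∈ Set.Icc (0 : ℝ) 1 := by simp
    have i1 : (1 : ℝ) ∈ Set.Icc (0 : ℝ) 1 := by simp
    have e1 : ∀ y (hy : y ∈ sph (EuclideanSpace ℝ (Fin m))) t (ht : t ∈ Set.Icc (0 : ℝ) 1),
        K1 (y, t) = H1 (⟨y, hy⟩, ⟨t, ht⟩) := fun y hy t ht => hK1 (y, t) ⟨hy, ht⟩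
    have e0 : ∀ y (hy : y ∈ dsk (EuclideanSpace ℝ (Fin m))) t (ht : t ∈ Set.Icc (0 : ℝ) 1),
        K0 (y, t) = H0 (⟨y, hy⟩, ⟨t, ht⟩) := fun y hy t ht => hK0 (y, t) ⟨hy, ht⟩
    refine ⟨L, cL, K1, K0, cK1, cK0, fun y hy => ?_, fun y hy => ?_, fun z hz => ?_,
      fun z hz => ?_, fun y hy t ht => ?_⟩
    · exact (e1 y hy 0 i0).trans (a1 ⟨y, hy⟩)
    · exact (e1 y hy 1 i1).trans ((a2 ⟨y, hy⟩).trans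
        (hL y (Metric.sphere_subset_closedBall hy)).symm)
    · exact (e0 z hz 0 i0).trans (a3 ⟨z, hz⟩)
    · exact (e0 z hz 1 i1).trans ((a4 ⟨z, hz⟩).trans (congrArg f (hL z hz)).symm)
    · exact (congrArg f (e1 y hy t ht)).trans ((a5 ⟨y, hy⟩ ⟨t, ht⟩).trans
        (e0 y (Metric.sphere_subset_closedBall hy) t ht).symm)
  · intro h g1 g0 hg1 hg0 hg
    obtain ⟨G1, cG1, hG1⟩ := exists_extend hg1
    obtain ⟨G0, cG0, hG0⟩ := exists_extend hg0
    obtain ⟨l, hl, H1, H0, cH1, cH0, a1, a2, a3, a4, a5⟩ := h G1 G0 cG1 cG0 fun y hy => by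
      rw [hG1 y hy, hG0 y (Metric.sphere_subset_closedBall hy)]
      exact hg ⟨y, hy⟩
    refine ⟨fun z => l z, continuousOn_iff_continuous_domRestrict.1 hl, fun p => H1 (p.1, p.2),
      fun p => H0 (p.1, p.2), cH1.comp_continuous (by fun_prop) fun p => ⟨p.1.2, p.2.2⟩,
      cH0.comp_continuous (by fun_prop) fun p => ⟨p.1.2, p.2.2⟩, fun y => ?_, fun y => a2 y y.2,
      fun z => ?_, fun z => a4 z z.2, fun y t => a5 y y.2 t t.2⟩
    · exact (a1 y y.2).trans (hG1 y y.2)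
    · exact (a3 z z.2).trans (hG0 z z.2)

/-- In dimension `0` the sphere is empty and the disc is a point. -/
lemma discLifting_zero_iff (f : C(T, T')) :
    DiscLifting f 0 ↔ Function.Surjective (zerothHomotopyMap f) := by
  have hS : IsEmpty (Metric.sphere (0 : EuclideanSpace ℝ (Fin 0)) 1) := by
    refine ⟨fun y => ?_⟩
    have := y.2
    rw [Subsingleton.elim y.1 0] at this
    simp at this
  let o : Metric.closedBall (0 : EuclideanSpace ℝ (Fin 0)) 1 := ⟨0, by simp⟩
  constructor
  · rintro h ⟨y⟩
    obtain ⟨l, -, -, H0, -, cH0, -, -, a3, a4, -⟩ := h (fun s => hS.elim s) (fun _ => y)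
      (continuous_of_const fun s => hS.elim s) continuous_const fun s => hS.elim s
    have hj : Joined y (f (l o)) :=
      ⟨⟨⟨fun t => H0 (o, t), by fun_prop⟩, a3 o, a4 o⟩⟩
    exact ⟨ZerothHomotopy.mk (l o), @Quotient.sound _ (pathSetoid T') _ _ hj.symm⟩
  · intro h g1 g0 _ _ _
    obtain ⟨⟨x⟩, hx⟩ := h (ZerothHomotopy.mk (g0 o))
    obtain ⟨γ⟩ : Joined (f x) (g0 o) := @Quotient.exact _ (pathSetoid T') _ _ hx
    refine ⟨fun _ => x, continuous_const, fun _ => x, fun p => γ.symm p.2, continuous_const,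
      by fun_prop, fun y => hS.elim y, fun y => hS.elim y, fun z => ?_, fun z => ?_,
      fun y => hS.elim y⟩
    · rw [Subsingleton.elim z o]
      exact γ.symm.source
    · exact γ.symm.target

end

/-- A map `f : T → T'` is a weak homotopy equivalence if and only if for every `n ≥ -1`
(encoded as a dimension `m = n + 1 ≥ 0`), every square `g¹ : Sⁿ → T`, `g⁰ : Dⁿ⁺¹ → T'`
with `f ∘ g¹ = g⁰|_{Sⁿ}` admits `l : Dⁿ⁺¹ → T` such that `(l|_{Sⁿ}, f ∘ l)` is homotopic
to `(g¹, g⁰)` as a map of arrows: there are homotopies `H¹` from `g¹` to `l|_{Sⁿ}` and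
`H⁰` from `g⁰` to `f ∘ l` with `f ∘ H¹ = H⁰` restricted to `Sⁿ × [0,1]`. -/
theorem isWeakHomotopyEquiv_iff_arrow_lifting {T T' : Type*}
    [TopologicalSpace T] [TopologicalSpace T'] (f : C(T, T')) :
    IsWeakHomotopyEquiv f ↔
      ∀ (m : ℕ)
        (g1 : Metric.sphere (0 : EuclideanSpace ℝ (Fin m)) 1 → T)
        (g0 : Metric.closedBall (0 : EuclideanSpace ℝ (Fin m)) 1 → T'),
        Continuous g1 → Continuous g0 →
        (∀ y, f (g1 y) = g0 ⟨y.1, Metric.sphere_subset_closedBall y.2⟩) →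
        ∃ l : Metric.closedBall (0 : EuclideanSpace ℝ (Fin m)) 1 → T,
          Continuous l ∧
          ∃ H1 : Metric.sphere (0 : EuclideanSpace ℝ (Fin m)) 1 × unitInterval → T,
          ∃ H0 : Metric.closedBall (0 : EuclideanSpace ℝ (Fin m)) 1 × unitInterval → T',
            Continuous H1 ∧ Continuous H0 ∧
            (∀ y, H1 (y, 0) = g1 y) ∧
            (∀ y, H1 (y, 1) = l ⟨y.1, Metric.sphere_subset_closedBall y.2⟩) ∧
            (∀ z, H0 (z, 0) = g0 z) ∧
            (∀ z, H0 (z, 1) = f (l z)) ∧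
            (∀ y t, f (H1 (y, t)) = H0 (⟨y.1, Metric.sphere_subset_closedBall y.2⟩, t)) := by
  change _ ↔ ∀ m, DiscLifting f m
  constructor
  · rintro ⟨⟨hinj, hsurj⟩, hπ⟩ m
    cases m with
    | zero => exact (discLifting_zero_iff f).2 hsurj
    | succ n =>
      intro g1
      -- the sphere in positive dimension is inhabited, hence so is `T`
      have hT : Nonempty T := by
        obtain ⟨y, hy⟩ := NormedSpace.sphere_nonempty (E := EuclideanSpace ℝ (Fin (n + 1)))
          (x := 0) (r := 1) |>.2 zero_le_one
        exact ⟨g1 ⟨y, hy⟩⟩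
      have hI : ∀ x : T, Function.Injective (homotopyGroupMap (Fin n) f x) := by
        cases n with
        | zero => exact (homotopyGroupMap_zero_injective_iff f).2 hinj
        | succ k => exact fun x => (hπ k x).1
      have hA : LoopSurj f ((Fin n → ℝ) × ℝ) :=
        LoopSurj.of_finrank (V := Fin (n + 1) → ℝ) (by simp)
          (loopSurj_of_surjective fun x => (hπ n x).2)
      exact (discLifting_iff f (n + 1)).2 (Liftable.of_finrank (F := (Fin n → ℝ) × ℝ) (by simp)
        fun _ _ hg1 hg0 hg => liftable_prod (loopInj_of_injective hI) hA hg1 hg0 hg) g1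
  · intro h
    have hI : ∀ (n : ℕ) (x : T), Function.Injective (homotopyGroupMap (Fin n) f x) := fun n x => by
      have : Nonempty T := ⟨x⟩
      exact homotopyGroupMap_injective (Liftable.of_finrank
        (F := EuclideanSpace ℝ (Fin (n + 1))) (by simp) ((discLifting_iff f _).1 (h _))) x
    refine ⟨⟨(homotopyGroupMap_zero_injective_iff f).1 (hI 0), (discLifting_zero_iff f).1 (h 0)⟩,
      fun n x => ⟨hI _ x, ?_⟩⟩
    have : Nonempty T := ⟨x⟩
    exact homotopyGroupMap_surjective (Liftable.of_finrank
      (F := EuclideanSpace ℝ (Fin (n + 1))) (by simp) ((discLifting_iff f _).1 (h _))) x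

end
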